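/- arXiv:2012.08376 — 3 statements merged into one kernel-verified Lean document; each statement's English description precedes it below -/
import Mathlib

section
/- Let f and g be slice regular functions on a symmetric domain in ℍ and let k ≥ 1. Then (∂_c∂_s)^k(f·g) = ((∂_c∂_s)^k f)·(v_s g) + (v_s f)·((∂_c∂_s)^k g) + (1/2){ Σ_{h=0}^{k−1} C(k−1,h)[(∂_s(∂_c∂_s)^{k−(h+1)} f)·(∂_c(∂_s∂_c)^h g) + (∂_c(∂_s∂_c)^h f)·(∂_s(∂_c∂_s)^{k−(h+1)} g)] + Σ_{h=1}^{k−1} C(k−1,h)[((∂_c∂_s)^{k−h} f)·((∂_s∂_c)^h g) + ((∂_s∂_c)^h f)·((∂_c∂_s)^{k−h} g)] }. -/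
noncomputable section

open Quaternion

abbrev ℍq := Quaternion ℝ

/-- Spherical value of a function of a quaternionic variable. -/
def svalue (f : ℍq → ℍq) (x : ℍq) : ℍq := (f x + f (star x)) / 2

/-- Spherical derivative of a function of a quaternionic variable. -/
def sderiv' (f : ℍq → ℍq) (x : ℍq) : ℍq := (2 * x.im)⁻¹ * (f x - f (star x))

/-- The imaginary unit `Im(x)/|Im(x)|` attached to a (non-real) quaternion. -/
def qJ (x : ℍq) : ℍq := (‖x.im‖)⁻¹ • x.im

/-- Slice (Cullen) derivative `∂_c f = (1/2)(∂/∂α − I ∂/∂β) f` at `x = α + Iβ`. -/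
def cderiv (f : ℍq → ℍq) (x : ℍq) : ℍq :=
  (1/2 : ℝ) • (fderiv ℝ f x 1 - qJ x * fderiv ℝ f x (qJ x))

/-- The conjugate operator `∂̄_c f = (1/2)(∂/∂α + I ∂/∂β) f`. -/
def cderivBar (f : ℍq → ℍq) (x : ℍq) : ℍq :=
  (1/2 : ℝ) • (fderiv ℝ f x 1 + qJ x * fderiv ℝ f x (qJ x))

/-- A circular (axially symmetric) subset of the quaternions. -/
def IsCircular (Ω : Set ℍq) : Prop :=
  ∀ x ∈ Ω, ∀ y : ℍq, y.re = x.re → ‖y.im‖ = ‖x.im‖ → y ∈ Ω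

/-- A slice function on `Ω`: it is determined by the representation formula
`f(α + Iβ) = F₀(α,β) + I F₁(α,β)` with `F₀ = v_s f`, `F₁ = β ∂_s f`. -/
def IsSlice (Ω : Set ℍq) (f : ℍq → ℍq) : Prop :=
  ∀ x ∈ Ω, ∀ y ∈ Ω, x.re = y.re → ‖x.im‖ = ‖y.im‖ →
    f x = svalue f y + x.im * sderiv' f y

/-- A slice regular function on a circular domain: a real-differentiable slice
function whose stem function is holomorphic, i.e. `∂̄_c f = 0` off the reals. -/
def IsSliceRegular (Ω : Set ℍq) (f : ℍq → ℍq) : Prop :=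
  IsSlice Ω f ∧ DifferentiableOn ℝ f Ω ∧ ∀ x ∈ Ω, x.im ≠ 0 → cderivBar f x = 0

/-- Pointwise formula for the slice product `f·g = 𝓘(FG)` of two slice functions. -/
def sprod (f g : ℍq → ℍq) (x : ℍq) : ℍq :=
  svalue f x * svalue g x + x.im * x.im * (sderiv' f x * sderiv' g x)
    + x.im * (svalue f x * sderiv' g x + sderiv' f x * svalue g x)

/-- Characteristic polynomial of `q₀`: `Δ_{q₀}(x) = x² − 2 Re(q₀) x + |q₀|²`. -/
def Delta (q₀ : ℍq) (x : ℍq) : ℍq := x ^ 2 - 2 * (q₀.re : ℍq) * x + ((‖q₀‖ ^ 2 : ℝ) : ℍq)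

/-- The operator `∂_c ∂_s`. -/
def opCS (f : ℍq → ℍq) : ℍq → ℍq := cderiv (sderiv' f)

/-- The operator `∂_s ∂_c`. -/
def opSC (f : ℍq → ℍq) : ℍq → ℍq := sderiv' (cderiv f)


section abstractPart
variable {M : Type*} [AddCommGroup M] [Module ℝ M]

theorem abs_pascal (L : M →ₗ[ℝ] M) (W : ℕ → ℕ → M)
    (h0 : ∀ p, L (W 0 p) = W 1 p) (h1 : ∀ h p, L (W (h+1) p) = W (h+2) p + W (h+1) (p+1)) (k : ℕ) :
    L (∑ ij ∈ Finset.HasAntidiagonal.antidiagonal k, k.choose ij.1 • W ij.1 ij.2) + W 0 (k+1)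
      = ∑ ij ∈ Finset.HasAntidiagonal.antidiagonal (k+1), (k+1).choose ij.1 • W ij.1 ij.2 := by
  rw [Finset.sum_antidiagonal_choose_succ_nsmul W k, map_sum]
  have h2 : ∀ ij ∈ Finset.HasAntidiagonal.antidiagonal k, L (k.choose ij.1 • W ij.1 ij.2) =
      (k.choose ij.1 • (if ij.1 = 0 then 0 else W ij.1 (ij.2+1))) + k.choose ij.2 • W (ij.1+1) ij.2 := by
    rintro ⟨i, j⟩ hij
    rw [Finset.HasAntidiagonal.mem_antidiagonal] at hij
    have : k.choose i = k.choose j := by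
      rw [← hij]; exact Nat.choose_symm_add
    simp only [map_nsmul]
    rcases i with _ | i
    · simp [h0, this]
    · rw [h1, this]; simp only [smul_add, Nat.add_eq_zero_iff, one_ne_zero, and_false, if_false]
      rw [add_comm]
  rw [Finset.sum_congr rfl h2, Finset.sum_add_distrib]
  have h3 : ∑ ij ∈ Finset.HasAntidiagonal.antidiagonal k, (k.choose ij.1 • (if ij.1 = 0 then 0 else W ij.1 (ij.2+1)))
      + W 0 (k+1) = ∑ ij ∈ Finset.HasAntidiagonal.antidiagonal k, k.choose ij.1 • W ij.1 (ij.2+1) := by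
    rw [Finset.Nat.sum_antidiagonal_eq_sum_range_succ_mk, Finset.Nat.sum_antidiagonal_eq_sum_range_succ_mk,
      Finset.sum_range_succ', Finset.sum_range_succ']
    simp
  rw [← h3]; abel

theorem abs_main (s v c : M →ₗ[ℝ] M) (mul : M → M → M)
    (mul0 : ∀ m, mul m 0 = 0) (zmul : ∀ m, mul 0 m = 0)
    (msm : ∀ (a : ℝ) m n, mul m (a • n) = a • mul m n)
    (smm : ∀ (a : ℝ) m n, mul (a • m) n = a • mul m n)
    (ss : ∀ m, s (s m) = 0) (sv : ∀ m, s (v m) = 0) (vv : ∀ m, v (v m) = v m)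
    (vs : ∀ m, v (s m) = s m)
    (hs : ∀ m n, s (mul m n) = mul (s m) (v n) + mul (v m) (s n))
    (hc : ∀ m n, c (mul m n) = mul (c m) n + mul m (c n))
    (f g : M) (hf : c (v f) = (1/2 : ℝ) • c f) (hg : c (v g) = (1/2 : ℝ) • c g) (k : ℕ) :
    (fun m => c (s m))^[k+1] (mul f g) = mul ((fun m => c (s m))^[k+1] f) (v g)
      + mul (v f) ((fun m => c (s m))^[k+1] g)
      + (1/2 : ℝ) • (∑ h ∈ Finset.range (k+1), k.choose h •
          (mul (s ((fun m => c (s m))^[k-h] f)) (c ((fun m => s (c m))^[h] g))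
            + mul (c ((fun m => s (c m))^[h] f)) (s ((fun m => c (s m))^[k-h] g)))
        + ∑ h ∈ Finset.Ico 1 (k+1), k.choose h •
          (mul ((fun m => c (s m))^[k+1-h] f) ((fun m => s (c m))^[h] g)
            + mul ((fun m => s (c m))^[h] f) ((fun m => c (s m))^[k+1-h] g))) := by
  set cs : M → M := fun m => c (s m) with hcs
  set sc : M → M := fun m => s (c m) with hsc
  have css : ∀ n m, cs^[n+1] m = c (s (cs^[n] m)) := fun n m => Function.iterate_succ_apply' cs n m
  have scs : ∀ n m, sc^[n+1] m = s (c (sc^[n] m)) := fun n m => Function.iterate_succ_apply' sc n m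
  let L : M →ₗ[ℝ] M := c ∘ₗ s
  have hL : ∀ m, L m = c (s m) := fun _ => rfl
  let W : ℕ → ℕ → M := fun h p =>
    (mul (s (cs^[p] f)) (c (sc^[h] g)) + mul (c (sc^[h] f)) (s (cs^[p] g)))
    + if h = 0 then 0 else
      (mul (cs^[p+1] f) (sc^[h] g) + mul (sc^[h] f) (cs^[p+1] g))
  have W0 : ∀ p, L (W 0 p) = W 1 p := by
    intro p
    simp only [W, hL, if_true, add_zero, map_add, hs, ss, vs, zmul, mul0, zero_add, one_ne_zero, if_false, scs 0, css]
    simp only [hc, scs 0, css, Function.iterate_zero, id]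
    abel
  have W1 : ∀ h p, L (W (h+1) p) = W (h+2) p + W (h+1) (p+1) := by
    intro h p
    simp only [W, hL, map_add, hs, ss, vs, zmul, mul0, zero_add, add_zero, Nat.add_eq_zero_iff, one_ne_zero, OfNat.ofNat_ne_zero, and_false, if_false, scs, css, hc]
    abel
  have key : ∀ k, cs^[k+1] (mul f g) = mul (cs^[k+1] f) (v g) + mul (v f) (cs^[k+1] g)
      + (1/2 : ℝ) • ∑ ij ∈ Finset.HasAntidiagonal.antidiagonal k, k.choose ij.1 • W ij.1 ij.2 := by
    intro k
    induction k with
    | zero =>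
      simp only [Finset.Nat.antidiagonal_zero, Finset.sum_singleton, W, zero_add, Function.iterate_one, Function.iterate_zero, id, if_true, hcs, hs, map_add, hc, hf, hg, msm, smm, Nat.choose_self, one_smul, add_zero, smul_add]
      abel
    | succ k ih =>
      rw [css, ih, ← abs_pascal L W W0 W1 k, ← hL, map_add, map_add, map_smul, smul_add]
      have e1 : L (mul (cs^[k+1] f) (v g)) = mul (cs^[k+1+1] f) (v g) + (1/2:ℝ) • mul (s (cs^[k+1] f)) (c g) := by
        rw [hL, hs, vv, sv, mul0, add_zero, hc, hg, msm, css (k+1)]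
      have e2 : L (mul (v f) (cs^[k+1] g)) = mul (v f) (cs^[k+1+1] g) + (1/2:ℝ) • mul (c f) (s (cs^[k+1] g)) := by
        rw [hL, hs, vv, sv, zmul, zero_add, hc, hf, smm, css (k+1), add_comm]
      rw [e1, e2]
      simp only [W, if_true, add_zero, Function.iterate_zero, id, smul_add]
      abel
  rw [key]
  congr 2
  rw [Finset.Nat.sum_antidiagonal_eq_sum_range_succ_mk]
  simp only [W]
  rw [Finset.sum_congr rfl (fun h _ => smul_add _ _ _), Finset.sum_add_distrib]
  congr 1
  rw [Finset.range_eq_Ico, Finset.sum_eq_sum_Ico_succ_bot (by omega)]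
  simp only [if_true, smul_zero, zero_add]
  apply Finset.sum_congr rfl
  intro h hh
  rw [Finset.mem_Ico] at hh
  rw [if_neg (by omega), show k + 1 - h = k - h + 1 by omega]
end abstractPart

section concretePart
open scoped ContDiff

def imL : ℍq →L[ℝ] ℍq := LinearMap.toContinuousLinearMap
  { toFun := fun x => x.im, map_add' := by intros; simp, map_smul' := by intros; simp }
def reL : ℍq →L[ℝ] ℝ := LinearMap.toContinuousLinearMap
  { toFun := fun x => x.re, map_add' := by intros; simp, map_smul' := by intros; simp }
theorem imL_apply (x : ℍq) : imL x = x.im := rfl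
theorem reL_apply (x : ℍq) : reL x = x.re := rfl

theorem q_two : (2 : ℍq) = ((2 : ℝ) : ℍq) := by
  rw [← one_add_one_eq_two, ← one_add_one_eq_two, Quaternion.coe_add, Quaternion.coe_one]

theorem q_two_ne : (2 : ℍq) ≠ 0 := by
  rw [q_two, Ne, ← Quaternion.coe_zero, Quaternion.coe_inj]
  exact two_ne_zero

/-- squared norm of the imaginary part -/
def rr (x : ℍq) : ℝ := ‖x.im‖ ^ 2

theorem im_mul_im (x : ℍq) : x.im * x.im = -((rr x : ℝ) : ℍq) := by
  have := Quaternion.im_sq x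
  rw [sq, Quaternion.normSq_eq_norm_mul_self] at this
  rw [this, rr, sq]

theorem rr_ne {x : ℍq} (h : x.im ≠ 0) : rr x ≠ 0 := by
  unfold rr; simpa using h

theorem rr_contDiff : ContDiff ℝ ∞ rr := by
  have : ContDiff ℝ ∞ (fun x : ℍq => ‖imL x‖ ^ 2) := (imL.contDiff).norm_sq ℝ
  exact this

theorem rr_hasFDerivAt (x : ℍq) : ∃ R : ℍq →L[ℝ] ℝ, HasFDerivAt rr R x ∧ R 1 = 0 ∧ R x.im = 2 * rr x := by
  have h : HasFDerivAt (fun x : ℍq => ‖imL x‖ ^ 2) _ x := (imL.hasFDerivAt).norm_sq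
  refine ⟨_, h, ?_, ?_⟩
  · simp [imL_apply]
  · simp [imL_apply, rr]

/-- smooth radial functions -/
def SR (U : Set ℍq) (P : ℍq → ℍq) : Prop :=
  ContDiffOn ℝ ∞ P U ∧ ∀ x ∈ U, ∀ y : ℍq, y.re = x.re → ‖y.im‖ = ‖x.im‖ → P y = P x

variable {U : Set ℍq}

theorem SR.add {P Q : ℍq → ℍq} (hP : SR U P) (hQ : SR U Q) : SR U (fun x => P x + Q x) :=
  ⟨hP.1.add hQ.1, fun x hx y h1 h2 => by simp only [hP.2 x hx y h1 h2, hQ.2 x hx y h1 h2]⟩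
theorem SR.sub {P Q : ℍq → ℍq} (hP : SR U P) (hQ : SR U Q) : SR U (fun x => P x - Q x) :=
  ⟨hP.1.sub hQ.1, fun x hx y h1 h2 => by simp only [hP.2 x hx y h1 h2, hQ.2 x hx y h1 h2]⟩
theorem SR.mul {P Q : ℍq → ℍq} (hP : SR U P) (hQ : SR U Q) : SR U (fun x => P x * Q x) :=
  ⟨hP.1.mul hQ.1, fun x hx y h1 h2 => by simp only [hP.2 x hx y h1 h2, hQ.2 x hx y h1 h2]⟩
theorem SR.csmul {P : ℍq → ℍq} (a : ℝ) (hP : SR U P) : SR U (fun x => a • P x) :=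
  ⟨hP.1.const_smul a, fun x hx y h1 h2 => by simp only [hP.2 x hx y h1 h2]⟩
theorem SR.rsmul {P : ℍq → ℍq} (hP : SR U P) : SR U (fun x => rr x • P x) :=
  ⟨rr_contDiff.contDiffOn.smul hP.1, fun x hx y h1 h2 => by simp only [hP.2 x hx y h1 h2, rr, h2]⟩
theorem SR.rismul (hne : ∀ x ∈ U, x.im ≠ 0) {P : ℍq → ℍq} (hP : SR U P) :
    SR U (fun x => (rr x)⁻¹ • P x) :=
  ⟨(rr_contDiff.contDiffOn.inv (fun x hx => rr_ne (hne x hx))).smul hP.1,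
    fun x hx y h1 h2 => by simp only [hP.2 x hx y h1 h2, rr, h2]⟩

theorem SR.dir (hU : IsOpen U) (hc : IsCircular U) {P : ℍq → ℍq} (hP : SR U P) (v : ℍq → ℍq)
    (hv : ContDiff ℝ ∞ v)
    (hr : ∀ x y : ℍq, y.re = x.re → ‖y.im‖ = ‖x.im‖ → ∀ t : ℝ,
      (y + t • v y).re = (x + t • v x).re ∧ ‖(y + t • v y).im‖ = ‖(x + t • v x).im‖) :
    SR U (fun x => fderiv ℝ P x (v x)) := by
  refine ⟨(hP.1.fderiv_of_isOpen hU (by simp)).clm_apply hv.contDiffOn, ?_⟩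
  intro x hx y h1 h2
  have hy : y ∈ U := hc x hx y h1 h2
  have hd : ∀ z ∈ U, DifferentiableAt ℝ P z := fun z hz =>
    (hP.1.contDiffAt (hU.mem_nhds hz)).differentiableAt (by simp)
  change fderiv ℝ P y (v y) = fderiv ℝ P x (v x)
  rw [← (hd x hx).lineDeriv_eq_fderiv, ← (hd y hy).lineDeriv_eq_fderiv]
  unfold lineDeriv
  apply Filter.EventuallyEq.deriv_eq
  have ht : ContinuousAt (fun t : ℝ => x + t • v x) 0 := by fun_prop
  have : ∀ᶠ t : ℝ in nhds 0, x + t • v x ∈ U := by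
    apply ht
    simpa using hU.mem_nhds hx
  filter_upwards [this] with t htU
  exact hP.2 _ htU _ (hr x y h1 h2 t).1 (hr x y h1 h2 t).2

theorem SR.d1 (hU : IsOpen U) (hc : IsCircular U) {P : ℍq → ℍq} (hP : SR U P) :
    SR U (fun x => fderiv ℝ P x 1) := by
  apply hP.dir hU hc (fun _ => 1) contDiff_const
  intro x y h1 h2 t
  simp [h1, h2]

theorem SR.dE (hU : IsOpen U) (hc : IsCircular U) {P : ℍq → ℍq} (hP : SR U P) :
    SR U (fun x => fderiv ℝ P x x.im) := by
  apply hP.dir hU hc (fun x => x.im) (imL.contDiff)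
  intro x y h1 h2 t
  have : ∀ z : ℍq, (z + t • z.im).im = (1 + t) • z.im := by
    intro z; simp [add_smul]
  rw [this, this, norm_smul, norm_smul]
  simp [h1, h2]

/-- smooth radial functions vanishing outside `U` -/
def Rad (U : Set ℍq) : Submodule ℝ (ℍq → ℍq) where
  carrier := {P | SR U P ∧ ∀ x, x ∉ U → P x = 0}
  add_mem' := fun {P Q} hP hQ => ⟨hP.1.add hQ.1, fun x hx => by simp [hP.2 x hx, hQ.2 x hx]⟩
  zero_mem' := ⟨⟨contDiffOn_const, fun _ _ _ _ _ => rfl⟩, fun _ _ => rfl⟩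
  smul_mem' := fun a P hP => ⟨hP.1.csmul a, fun x hx => by simp [hP.2 x hx]⟩

open Classical in
def mkR (U : Set ℍq) (Q : ℍq → ℍq) (hc : IsCircular U) (hQ : SR U Q) : Rad U :=
  ⟨U.indicator Q, ⟨hQ.1.congr (fun x hx => Set.indicator_of_mem hx Q), by
    intro x hx y h1 h2
    rw [Set.indicator_of_mem hx, Set.indicator_of_mem (hc x hx y h1 h2)]
    exact hQ.2 x hx y h1 h2⟩, fun x hx => Set.indicator_of_notMem hx Q⟩

theorem mkR_apply {Q : ℍq → ℍq} (hc : IsCircular U) (hQ : SR U Q) {x : ℍq} (hx : x ∈ U) :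
    (mkR U Q hc hQ).1 x = Q x := Set.indicator_of_mem hx Q

theorem Rad.ext' {P Q : Rad U} (h : ∀ x ∈ U, P.1 x = Q.1 x) : P = Q := by
  apply Subtype.ext
  funext x
  by_cases hx : x ∈ U
  · exact h x hx
  · rw [P.2.2 x hx, Q.2.2 x hx]

theorem rad_diff (hU : IsOpen U) (P : Rad U) {x : ℍq} (hx : x ∈ U) : HasFDerivAt P.1 (fderiv ℝ P.1 x) x :=
  ((P.2.1.1.contDiffAt (hU.mem_nhds hx)).differentiableAt (by simp)).hasFDerivAt

theorem M.ext' {m n : Rad U × Rad U} (h : ∀ x ∈ U, m.1.1 x = n.1.1 x ∧ m.2.1 x = n.2.1 x) : m = n :=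
  Prod.ext (Rad.ext' fun x hx => (h x hx).1) (Rad.ext' fun x hx => (h x hx).2)

def sM (U : Set ℍq) : (Rad U × Rad U) →ₗ[ℝ] (Rad U × Rad U) where
  toFun m := (m.2, 0)
  map_add' := by intros; simp
  map_smul' := by intros; simp

def vM (U : Set ℍq) : (Rad U × Rad U) →ₗ[ℝ] (Rad U × Rad U) where
  toFun m := (m.1, 0)
  map_add' := by intros; simp
  map_smul' := by intros; simp

def cF (hU : IsOpen U) (hc : IsCircular U) (hne : ∀ x ∈ U, x.im ≠ 0) (m : Rad U × Rad U) : Rad U × Rad U :=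
  (mkR U (fun x => (1/2 : ℝ) • (fderiv ℝ m.1.1 x 1 + fderiv ℝ m.2.1 x x.im + m.2.1 x)) hc
      ((((m.1.2.1.d1 hU hc).add (m.2.2.1.dE hU hc)).add m.2.2.1).csmul _),
    mkR U (fun x => (1/2 : ℝ) • (fderiv ℝ m.2.1 x 1 - (rr x)⁻¹ • fderiv ℝ m.1.1 x x.im)) hc
      (((m.2.2.1.d1 hU hc).sub ((m.1.2.1.dE hU hc).rismul hne)).csmul _))

theorem cF_1 (hU : IsOpen U) (hc : IsCircular U) (hne : ∀ x ∈ U, x.im ≠ 0) (m : Rad U × Rad U)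
    {x : ℍq} (hx : x ∈ U) : (cF hU hc hne m).1.1 x =
      (1/2 : ℝ) • (fderiv ℝ m.1.1 x 1 + fderiv ℝ m.2.1 x x.im + m.2.1 x) := by
  unfold cF; simp only [mkR_apply hc _ hx]
theorem cF_2 (hU : IsOpen U) (hc : IsCircular U) (hne : ∀ x ∈ U, x.im ≠ 0) (m : Rad U × Rad U)
    {x : ℍq} (hx : x ∈ U) : (cF hU hc hne m).2.1 x =
      (1/2 : ℝ) • (fderiv ℝ m.2.1 x 1 - (rr x)⁻¹ • fderiv ℝ m.1.1 x x.im) := by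
  unfold cF; simp only [mkR_apply hc _ hx]

theorem Rad.fderiv_add (hU : IsOpen U) (P Q : Rad U) {x : ℍq} (hx : x ∈ U) :
    fderiv ℝ (P + Q).1 x = fderiv ℝ P.1 x + fderiv ℝ Q.1 x :=
  ((rad_diff hU P hx).add (rad_diff hU Q hx)).fderiv
theorem Rad.fderiv_smul (hU : IsOpen U) (a : ℝ) (P : Rad U) {x : ℍq} (hx : x ∈ U) :
    fderiv ℝ (a • P).1 x = a • fderiv ℝ P.1 x :=
  ((rad_diff hU P hx).const_smul a).fderiv

def cM (hU : IsOpen U) (hc : IsCircular U) (hne : ∀ x ∈ U, x.im ≠ 0) :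
    (Rad U × Rad U) →ₗ[ℝ] (Rad U × Rad U) where
  toFun := cF hU hc hne
  map_add' := by
    intro m n
    apply M.ext'
    intro x hx
    have a1 : ∀ P Q : Rad U, (P + Q).1 x = P.1 x + Q.1 x := fun _ _ => rfl
    simp only [Prod.fst_add, Prod.snd_add, a1, cF_1 hU hc hne _ hx, cF_2 hU hc hne _ hx,
      Rad.fderiv_add hU _ _ hx, add_apply]
    constructor <;> module
  map_smul' := by
    intro a m
    apply M.ext'
    intro x hx
    have a1 : ∀ P : Rad U, (a • P).1 x = a • P.1 x := fun _ => rfl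
    simp only [Prod.smul_fst, Prod.smul_snd, a1, cF_1 hU hc hne _ hx, cF_2 hU hc hne _ hx,
      Rad.fderiv_smul hU _ _ hx, smul_apply, RingHom.id_apply]
    constructor <;> module

def mulM (hc : IsCircular U) (m n : Rad U × Rad U) : Rad U × Rad U :=
  (mkR U (fun x => m.1.1 x * n.1.1 x - rr x • (m.2.1 x * n.2.1 x)) hc
      ((m.1.2.1.mul n.1.2.1).sub (m.2.2.1.mul n.2.2.1).rsmul),
    mkR U (fun x => m.1.1 x * n.2.1 x + m.2.1 x * n.1.1 x) hc
      ((m.1.2.1.mul n.2.2.1).add (m.2.2.1.mul n.1.2.1)))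

theorem mulM_1 (hc : IsCircular U) (m n : Rad U × Rad U) {x : ℍq} (hx : x ∈ U) :
    (mulM hc m n).1.1 x = m.1.1 x * n.1.1 x - rr x • (m.2.1 x * n.2.1 x) := by
  unfold mulM; simp only [mkR_apply hc _ hx]
theorem mulM_2 (hc : IsCircular U) (m n : Rad U × Rad U) {x : ℍq} (hx : x ∈ U) :
    (mulM hc m n).2.1 x = m.1.1 x * n.2.1 x + m.2.1 x * n.1.1 x := by
  unfold mulM; simp only [mkR_apply hc _ hx]

theorem mulM_fderiv (hU : IsOpen U) (hc : IsCircular U) (m n : Rad U × Rad U) {x : ℍq} (hx : x ∈ U) :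
    ∃ R : ℍq →L[ℝ] ℝ, R 1 = 0 ∧ R x.im = 2 * rr x ∧
    (∀ v, fderiv ℝ (mulM hc m n).1.1 x v = m.1.1 x * fderiv ℝ n.1.1 x v + fderiv ℝ m.1.1 x v * n.1.1 x
      - (rr x • (m.2.1 x * fderiv ℝ n.2.1 x v + fderiv ℝ m.2.1 x v * n.2.1 x) + R v • (m.2.1 x * n.2.1 x))) ∧
    (∀ v, fderiv ℝ (mulM hc m n).2.1 x v = m.1.1 x * fderiv ℝ n.2.1 x v + fderiv ℝ m.1.1 x v * n.2.1 x
      + (m.2.1 x * fderiv ℝ n.1.1 x v + fderiv ℝ m.2.1 x v * n.1.1 x)) := by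
  obtain ⟨R, hR, hR1, hR2⟩ := rr_hasFDerivAt x
  refine ⟨R, hR1, hR2, ?_, ?_⟩
  · intro v
    have h := ((rad_diff hU m.1 hx).mul' (rad_diff hU n.1 hx)).sub
      (hR.smul ((rad_diff hU m.2 hx).mul' (rad_diff hU n.2 hx)))
    have e : (mulM hc m n).1.1 =ᶠ[nhds x] fun x => m.1.1 x * n.1.1 x - rr x • (m.2.1 x * n.2.1 x) := by
      filter_upwards [hU.mem_nhds hx] with y hy using mulM_1 hc m n hy
    rw [(h.congr_of_eventuallyEq e).fderiv]
    simp
  · intro v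
    have h := ((rad_diff hU m.1 hx).mul' (rad_diff hU n.2 hx)).add ((rad_diff hU m.2 hx).mul' (rad_diff hU n.1 hx))
    have e : (mulM hc m n).2.1 =ᶠ[nhds x] fun x => m.1.1 x * n.2.1 x + m.2.1 x * n.1.1 x := by
      filter_upwards [hU.mem_nhds hx] with y hy using mulM_2 hc m n hy
    rw [(h.congr_of_eventuallyEq e).fderiv]
    simp

theorem cM_mul (hU : IsOpen U) (hc : IsCircular U) (hne : ∀ x ∈ U, x.im ≠ 0) (m n : Rad U × Rad U) :
    cM hU hc hne (mulM hc m n) = mulM hc (cM hU hc hne m) n + mulM hc m (cM hU hc hne n) := by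
  apply M.ext'
  intro x hx
  have a1 : ∀ P Q : Rad U, (P + Q).1 x = P.1 x + Q.1 x := fun _ _ => rfl
  have a2 : ∀ m, cM hU hc hne m = cF hU hc hne m := fun _ => rfl
  obtain ⟨R, hR1, hR2, h1, h2⟩ := mulM_fderiv hU hc m n hx
  have hr := rr_ne (hne x hx)
  simp only [Prod.fst_add, Prod.snd_add, a1, a2, cF_1 hU hc hne _ hx, cF_2 hU hc hne _ hx, mulM_1 hc _ _ hx,
    mulM_2 hc _ _ hx, h1, h2, hR1, hR2]
  simp only [smul_mul_assoc, mul_smul_comm, mul_add, add_mul, mul_sub, sub_mul]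
  constructor
  · match_scalars <;> field_simp <;> ring
  · match_scalars <;> field_simp <;> ring

/-- `f` is represented by `m` on `U`. -/
def SRep (m : Rad U × Rad U) (f : ℍq → ℍq) : Prop := ∀ x ∈ U, f x = m.1.1 x + x.im * m.2.1 x

theorem star_mem (hc : IsCircular U) {x : ℍq} (hx : x ∈ U) : star x ∈ U :=
  hc x hx _ (by simp) (by simp)

theorem SRep.starR {m : Rad U × Rad U} {f : ℍq → ℍq} (hc : IsCircular U) (h : SRep m f) {x : ℍq} (hx : x ∈ U) :
    f (star x) = m.1.1 x - x.im * m.2.1 x := by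
  rw [h _ (star_mem hc hx), m.1.2.1.2 x hx (Star.star x) (by simp) (by simp),
    m.2.2.1.2 x hx (Star.star x) (by simp) (by simp)]
  simp [sub_eq_add_neg]

theorem SRep.svalue_eq {m : Rad U × Rad U} {f : ℍq → ℍq} (hc : IsCircular U) (h : SRep m f) {x : ℍq} (hx : x ∈ U) :
    svalue f x = m.1.1 x := by
  unfold svalue
  rw [h.starR hc hx, h x hx, add_add_sub_cancel, ← mul_two]
  exact mul_div_cancel_right₀ _ q_two_ne

theorem SRep.sderiv_eq {m : Rad U × Rad U} {f : ℍq → ℍq} (hc : IsCircular U) (hne : ∀ x ∈ U, x.im ≠ 0)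
    (h : SRep m f) {x : ℍq} (hx : x ∈ U) : sderiv' f x = m.2.1 x := by
  unfold sderiv'
  rw [h.starR hc hx, h x hx, add_sub_sub_cancel, ← two_mul, ← mul_assoc 2]
  exact inv_mul_cancel_left₀ (mul_ne_zero q_two_ne (hne x hx)) _

theorem SRep.svalueR {m : Rad U × Rad U} {f : ℍq → ℍq} (hc : IsCircular U) (h : SRep m f) :
    SRep (vM U m) (svalue f) := by
  intro x hx
  rw [h.svalue_eq hc hx]
  simp [vM]

theorem SRep.sderivR {m : Rad U × Rad U} {f : ℍq → ℍq} (hc : IsCircular U) (hne : ∀ x ∈ U, x.im ≠ 0)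
    (h : SRep m f) : SRep (sM U m) (sderiv' f) := by
  intro x hx
  rw [h.sderiv_eq hc hne hx]
  simp [sM]

theorem SRep.sprodR {m n : Rad U × Rad U} {f g : ℍq → ℍq} (hc : IsCircular U) (hne : ∀ x ∈ U, x.im ≠ 0)
    (h : SRep m f) (h' : SRep n g) : SRep (mulM hc m n) (sprod f g) := by
  intro x hx
  unfold sprod
  rw [h.svalue_eq hc hx, h'.svalue_eq hc hx, h.sderiv_eq hc hne hx, h'.sderiv_eq hc hne hx,
    mulM_1 hc _ _ hx, mulM_2 hc _ _ hx, im_mul_im, neg_mul, Quaternion.coe_mul_eq_smul, sub_eq_add_neg]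

theorem SRep.fderivR {m : Rad U × Rad U} {f : ℍq → ℍq} (hU : IsOpen U)
    (h : SRep m f) {x : ℍq} (hx : x ∈ U) (v : ℍq) :
    fderiv ℝ f x v = fderiv ℝ m.1.1 x v + (x.im * fderiv ℝ m.2.1 x v + v.im * m.2.1 x) := by
  have h1 := (rad_diff hU m.1 hx).add ((imL.hasFDerivAt (x := x)).mul' (rad_diff hU m.2 hx))
  have e : f =ᶠ[nhds x] fun x => m.1.1 x + imL x * m.2.1 x := by
    filter_upwards [hU.mem_nhds hx] with y hy using h y hy
  rw [(h1.congr_of_eventuallyEq e).fderiv]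
  simp [imL_apply]

theorem qJ_term (x : ℍq) (D : ℍq →L[ℝ] ℍq) : qJ x * D (qJ x) = (rr x)⁻¹ • (x.im * D x.im) := by
  unfold qJ rr
  rw [map_smul, smul_mul_smul_comm, sq, mul_inv]

theorem im_im_mul (x q : ℍq) : x.im * (x.im * q) = - (rr x • q) := by
  rw [← mul_assoc, im_mul_im, neg_mul, Quaternion.coe_mul_eq_smul]

theorem SRep.cderivR {m : Rad U × Rad U} {f : ℍq → ℍq} (hU : IsOpen U) (hc : IsCircular U)
    (hne : ∀ x ∈ U, x.im ≠ 0) (h : SRep m f) : SRep (cM hU hc hne m) (cderiv f) := by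
  intro x hx
  have a2 : ∀ m, cM hU hc hne m = cF hU hc hne m := fun _ => rfl
  have hr := rr_ne (hne x hx)
  unfold cderiv
  rw [qJ_term, h.fderivR hU hx, h.fderivR hU hx, a2, cF_1 hU hc hne _ hx, cF_2 hU hc hne _ hx]
  simp only [Quaternion.im_idem, Quaternion.im_one, zero_mul, add_zero, mul_add, im_im_mul, mul_smul_comm, mul_sub]
  match_scalars <;> field_simp

theorem SRep.csIter {m : Rad U × Rad U} {f : ℍq → ℍq} (hU : IsOpen U) (hc : IsCircular U)
    (hne : ∀ x ∈ U, x.im ≠ 0) (h : SRep m f) (k : ℕ) :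
    SRep ((fun m => cM hU hc hne (sM U m))^[k] m) (opCS^[k] f) := by
  induction k with
  | zero => exact h
  | succ k ih =>
    rw [Function.iterate_succ_apply', Function.iterate_succ_apply']
    exact (ih.sderivR hc hne).cderivR hU hc hne

theorem SRep.scIter {m : Rad U × Rad U} {f : ℍq → ℍq} (hU : IsOpen U) (hc : IsCircular U)
    (hne : ∀ x ∈ U, x.im ≠ 0) (h : SRep m f) (k : ℕ) :
    SRep ((fun m => sM U (cM hU hc hne m))^[k] m) (opSC^[k] f) := by
  induction k with
  | zero => exact h
  | succ k ih =>
    rw [Function.iterate_succ_apply', Function.iterate_succ_apply']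
    exact (ih.cderivR hU hc hne).sderivR hc hne

/-- value of a pair at a point, as a linear map -/
def evM (U : Set ℍq) (x : ℍq) : (Rad U × Rad U) →ₗ[ℝ] ℍq where
  toFun m := m.1.1 x + x.im * m.2.1 x
  map_add' := by intro m n; simp [mul_add]; abel
  map_smul' := by intro a m; simp

theorem main_of_rep (hU : IsOpen U) (hc : IsCircular U) (hne : ∀ x ∈ U, x.im ≠ 0)
    {m n : Rad U × Rad U} {f g : ℍq → ℍq} (hf : SRep m f) (hg : SRep n g)
    (hm : cM hU hc hne (vM U m) = (1/2 : ℝ) • cM hU hc hne m)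
    (hn : cM hU hc hne (vM U n) = (1/2 : ℝ) • cM hU hc hne n) (k : ℕ) (hk : 1 ≤ k) :
    ∀ x ∈ U,
      opCS^[k] (sprod f g) x =
        sprod (opCS^[k] f) (svalue g) x + sprod (svalue f) (opCS^[k] g) x
        + (1/2 : ℝ) •
          ((∑ h ∈ Finset.range k, (k-1).choose h •
              (sprod (sderiv' (opCS^[k-(h+1)] f)) (cderiv (opSC^[h] g)) x
                + sprod (cderiv (opSC^[h] f)) (sderiv' (opCS^[k-(h+1)] g)) x))
          + ∑ h ∈ Finset.Ico 1 k, (k-1).choose h •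
              (sprod (opCS^[k-h] f) (opSC^[h] g) x
                + sprod (opSC^[h] f) (opCS^[k-h] g) x)) := by
  intro x hx
  obtain ⟨k, rfl⟩ : ∃ j, k = j + 1 := ⟨k - 1, by omega⟩
  have H := abs_main (sM U) (vM U) (cM hU hc hne) (mulM hc)
    (by intro m; apply M.ext'; intro x hx; simp [mulM_1 hc _ _ hx, mulM_2 hc _ _ hx])
    (by intro m; apply M.ext'; intro x hx; simp [mulM_1 hc _ _ hx, mulM_2 hc _ _ hx])
    (by
      intro a m n; apply M.ext'; intro x hx
      simp [mulM_1 hc _ _ hx, mulM_2 hc _ _ hx, smul_sub, smul_comm a])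
    (by
      intro a m n; apply M.ext'; intro x hx
      simp [mulM_1 hc _ _ hx, mulM_2 hc _ _ hx, smul_sub, smul_comm a])
    (fun m => rfl) (fun m => rfl) (fun m => rfl) (fun m => rfl)
    (by
      intro m n; apply M.ext'; intro x hx
      simp [mulM_1 hc _ _ hx, mulM_2 hc _ _ hx, sM, vM, add_comm])
    (cM_mul hU hc hne) m n hm hn k
  have ev : ∀ {m : Rad U × Rad U} {f : ℍq → ℍq}, SRep m f → f x = evM U x m := fun h => h x hx
  have cf := hf.csIter hU hc hne
  have cg := hg.csIter hU hc hne
  have sf := hf.scIter hU hc hne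
  have sg := hg.scIter hU hc hne
  rw [ev ((hf.sprodR hc hne hg).csIter hU hc hne (k+1)), H]
  simp only [map_add, map_smul, map_sum, map_nsmul]
  rw [ev ((cf (k+1)).sprodR hc hne (hg.svalueR hc)), ev ((hf.svalueR hc).sprodR hc hne (cg (k+1)))]
  congr 3
  · apply Finset.sum_congr rfl
    intro h _
    rw [show k + 1 - 1 = k by omega, show k + 1 - (h+1) = k - h by omega,
      ev (((cf (k-h)).sderivR hc hne).sprodR hc hne ((sg h).cderivR hU hc hne)),
      ev (((sf h).cderivR hU hc hne).sprodR hc hne ((cg (k-h)).sderivR hc hne))]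
  · apply Finset.sum_congr rfl
    intro h _
    rw [show k + 1 - 1 = k by omega,
      ev ((cf (k+1-h)).sprodR hc hne (sg h)), ev ((sf h).sprodR hc hne (cg (k+1-h)))]

def qmk (a b c d : ℝ) : ℍq := ⟨a, b, c, d⟩
@[simp] theorem qmk_re (a b c d : ℝ) : (qmk a b c d).re = a := rfl
@[simp] theorem qmk_imI (a b c d : ℝ) : (qmk a b c d).imI = b := rfl
@[simp] theorem qmk_imJ (a b c d : ℝ) : (qmk a b c d).imJ = c := rfl
@[simp] theorem qmk_imK (a b c d : ℝ) : (qmk a b c d).imK = d := rfl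

/-- embedding of the complex plane -/
def iL : ℂ →L[ℝ] ℍq := LinearMap.toContinuousLinearMap
  { toFun := fun z => qmk z.re z.im 0 0
    map_add' := by intros; ext <;> simp
    map_smul' := by intros; ext <;> simp }
def p1L : ℍq →L[ℝ] ℂ := LinearMap.toContinuousLinearMap
  { toFun := fun q => ⟨q.re, q.imI⟩
    map_add' := by intros; apply Complex.ext <;> simp
    map_smul' := by intros; apply Complex.ext <;> simp }
def p2L : ℍq →L[ℝ] ℂ := LinearMap.toContinuousLinearMap
  { toFun := fun q => ⟨q.imJ, q.imK⟩
    map_add' := by intros; apply Complex.ext <;> simp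
    map_smul' := by intros; apply Complex.ext <;> simp }
def qj : ℍq := qmk 0 0 1 0
theorem iL_apply (z : ℂ) : iL z = qmk z.re z.im 0 0 := rfl
theorem p1L_apply (q : ℍq) : p1L q = ⟨q.re, q.imI⟩ := rfl
theorem p2L_apply (q : ℍq) : p2L q = ⟨q.imJ, q.imK⟩ := rfl

theorem p_decomp (q : ℍq) : q = iL (p1L q) + iL (p2L q) * qj := by
  ext <;> simp [iL_apply, p1L_apply, p2L_apply, qj]
theorem p1_mul (q : ℍq) : p1L (iL Complex.I * q) = Complex.I * p1L q := by
  apply Complex.ext <;> simp [iL_apply, p1L_apply]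
theorem p2_mul (q : ℍq) : p2L (iL Complex.I * q) = Complex.I * p2L q := by
  apply Complex.ext <;> simp [iL_apply, p2L_apply]
theorem iI_sq : iL Complex.I * iL Complex.I = -1 := by
  ext <;> simp [iL_apply]
theorem iL_one : iL 1 = 1 := by
  ext <;> simp [iL_apply]
theorem iL_star (z : ℂ) : star (iL z) = iL (star z) := by
  ext <;> simp [iL_apply]
theorem iL_im (z : ℂ) : (iL z).im = z.im • iL Complex.I := by
  ext <;> simp [iL_apply]
theorem iL_re (z : ℂ) : (iL z).re = z.re := rfl
theorem iI_norm : ‖iL Complex.I‖ = 1 := by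
  have : ‖iL Complex.I‖ * ‖iL Complex.I‖ = 1 := by rw [← norm_mul, iI_sq]; simp
  nlinarith [norm_nonneg (iL Complex.I)]
theorem iL_im_norm (z : ℂ) : ‖(iL z).im‖ = |z.im| := by
  rw [iL_im, norm_smul, iI_norm]; simp

theorem inv_two_im (x : ℍq) : (2 * x.im)⁻¹ = (-(2 * rr x)⁻¹) • x.im := by
  by_cases h : x.im = 0
  · simp [h]
  apply inv_eq_of_mul_eq_one_right
  have h2 := rr_ne h
  rw [mul_smul_comm, mul_assoc, im_mul_im, q_two, mul_neg, ← Quaternion.coe_mul, smul_neg, neg_smul, neg_neg,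
    Quaternion.smul_coe, inv_mul_cancel₀ (mul_ne_zero two_ne_zero h2), Quaternion.coe_one]

theorem cr_fix {f : ℍq → ℍq} {z : ℂ} (hz : (iL z).im ≠ 0) (h : cderivBar f (iL z) = 0) :
    fderiv ℝ f (iL z) (iL Complex.I) = iL Complex.I * fderiv ℝ f (iL z) 1 := by
  unfold cderivBar at h
  rw [qJ_term, smul_eq_zero_iff_right (by norm_num)] at h
  have hz' : z.im ≠ 0 := by
    intro h0; apply hz; rw [iL_im, h0, zero_smul]
  have hr : rr (iL z) = z.im ^ 2 := by rw [rr, iL_im_norm, sq_abs]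
  rw [hr, iL_im, map_smul, smul_mul_smul_comm, smul_smul, ← sq, inv_mul_cancel₀ (pow_ne_zero 2 hz'), one_smul] at h
  have h2 := congrArg (fun q => iL Complex.I * q) h
  simp only [mul_add, ← mul_assoc, iI_sq, mul_zero, neg_mul, one_mul] at h2
  exact (add_neg_eq_zero.mp h2).symm

theorem comp_smooth {f : ℍq → ℍq} (hU : IsOpen U) (hne : ∀ x ∈ U, x.im ≠ 0)
    (hd : DifferentiableOn ℝ f U) (hb : ∀ x ∈ U, cderivBar f x = 0) :
    ContDiffOn ℝ ∞ (fun z => f (iL z)) (iL ⁻¹' U) := by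
  have hV : IsOpen (iL ⁻¹' U) := hU.preimage iL.continuous
  have key : ∀ p : ℍq →L[ℝ] ℂ, (∀ q, p (iL Complex.I * q) = Complex.I * p q) →
      ContDiffOn ℝ ∞ (fun z => p (f (iL z))) (iL ⁻¹' U) := by
    intro p hp
    have : DifferentiableOn ℂ (fun z => p (f (iL z))) (iL ⁻¹' U) := by
      intro z hz
      apply DifferentiableAt.differentiableWithinAt
      rw [differentiableAt_complex_iff_differentiableAt_real]
      have hfz := (hd.differentiableAt (hU.mem_nhds hz)).hasFDerivAt
      have h1 := p.hasFDerivAt.comp z (hfz.comp z iL.hasFDerivAt)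
      refine ⟨h1.differentiableAt, ?_⟩
      have h2 : fderiv ℝ (fun z => p (f (iL z))) z = _ := h1.fderiv
      rw [h2]
      simp only [ContinuousLinearMap.comp_apply, smul_eq_mul, iL_one]
      rw [cr_fix (hne _ hz) (hb _ hz), hp]
    exact (this.contDiffOn hV).restrict_scalars ℝ
  have h1 := key p1L p1_mul
  have h2 := key p2L p2_mul
  have : (fun z => f (iL z)) = fun z => iL (p1L (f (iL z))) + iL (p2L (f (iL z))) * qj := by
    funext z; exact p_decomp _
  rw [this]
  exact (iL.contDiff.comp_contDiffOn h1).add ((iL.contDiff.comp_contDiffOn h2).mul contDiffOn_const)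

def zeta (x : ℍq) : ℂ := x.re • (1 : ℂ) + ‖x.im‖ • Complex.I
theorem zeta_re (x : ℍq) : (zeta x).re = x.re := by simp [zeta]
theorem zeta_im (x : ℍq) : (zeta x).im = ‖x.im‖ := by simp [zeta]

theorem zeta_smooth (hne : ∀ x ∈ U, x.im ≠ 0) : ContDiffOn ℝ ∞ zeta U := by
  have h1 : ContDiffOn ℝ ∞ (fun x : ℍq => ‖imL x‖) U := (imL.contDiff.contDiffOn).norm ℝ hne
  have h2 : ContDiffOn ℝ ∞ (fun x : ℍq => reL x) U := reL.contDiff.contDiffOn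
  exact (h2.smul contDiffOn_const).add (h1.smul contDiffOn_const)

theorem iz_re (x : ℍq) : (iL (zeta x)).re = x.re := by rw [iL_re, zeta_re]
theorem iz_im (x : ℍq) : ‖(iL (zeta x)).im‖ = ‖x.im‖ := by rw [iL_im_norm, zeta_im, abs_norm]

theorem slice_radial {f : ℍq → ℍq} (hc : IsCircular U) (hne : ∀ x ∈ U, x.im ≠ 0) (hs : IsSlice U f)
    {x y : ℍq} (hx : x ∈ U) (h1 : y.re = x.re) (h2 : ‖y.im‖ = ‖x.im‖) :
    svalue f y = svalue f x ∧ sderiv' f y = sderiv' f x := by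
  have hy := hc x hx y h1 h2
  have e1 := hs y hy x hx h1 h2
  have e2 := hs (star y) (star_mem hc hy) x hx (by simpa using h1) (by simpa using h2)
  have hi : (star y).im = - y.im := by simp
  rw [hi] at e2
  constructor
  · rw [svalue, e1, e2, neg_mul, ← sub_eq_add_neg, add_add_sub_cancel, ← mul_two]
    exact mul_div_cancel_right₀ _ q_two_ne
  · rw [sderiv', e1, e2, neg_mul, ← sub_eq_add_neg, add_sub_sub_cancel, ← two_mul, ← mul_assoc 2]
    exact inv_mul_cancel_left₀ (mul_ne_zero q_two_ne (hne y hy)) _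

theorem reg_SR {f : ℍq → ℍq} (hU : IsOpen U) (hc : IsCircular U) (hne : ∀ x ∈ U, x.im ≠ 0)
    (hs : IsSlice U f) (hd : DifferentiableOn ℝ f U) (hb : ∀ x ∈ U, cderivBar f x = 0) :
    SR U (svalue f) ∧ SR U (sderiv' f) := by
  have hg := comp_smooth hU hne hd hb
  have hz := zeta_smooth hne
  have hz' : ContDiffOn ℝ ∞ (fun x => star (zeta x)) U := Complex.conjCLE.contDiff.comp_contDiffOn hz
  have m1 : ∀ x ∈ U, iL (zeta x) ∈ U := fun x hx => hc x hx _ (iz_re x) (iz_im x)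
  have m2 : ∀ x ∈ U, iL (star (zeta x)) ∈ U := fun x hx => by
    rw [← iL_star]; exact star_mem hc (m1 x hx)
  have g1 : ContDiffOn ℝ ∞ (fun x => f (iL (zeta x))) U := hg.comp hz m1
  have g2 : ContDiffOn ℝ ∞ (fun x => f (iL (star (zeta x)))) U := hg.comp hz' m2
  refine ⟨⟨?_, fun x hx y h1 h2 => (slice_radial hc hne hs hx h1 h2).1⟩,
    ⟨?_, fun x hx y h1 h2 => (slice_radial hc hne hs hx h1 h2).2⟩⟩
  · refine ((g1.add g2).mul (contDiffOn_const (c := (2 : ℍq)⁻¹))).congr ?_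
    intro x hx
    rw [← (slice_radial hc hne hs hx (iz_re x) (iz_im x)).1, svalue, iL_star, div_eq_mul_inv]
  · have hi : ContDiffOn ℝ ∞ (fun x => imL (iL (zeta x))) U :=
      imL.contDiff.comp_contDiffOn (iL.contDiff.comp_contDiffOn hz)
    have hr : ContDiffOn ℝ ∞ (fun x => -(2 * rr x)⁻¹) U :=
      ((contDiffOn_const.mul rr_contDiff.contDiffOn).inv
        (fun x hx => mul_ne_zero two_ne_zero (rr_ne (hne x hx)))).neg
    refine ((hr.smul hi).mul (g1.sub g2)).congr ?_
    intro x hx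
    rw [← (slice_radial hc hne hs hx (iz_re x) (iz_im x)).2, sderiv', iL_star, inv_two_im, rr, iz_im]
    rfl

theorem reg_rep {f : ℍq → ℍq} (hU : IsOpen U) (hc : IsCircular U) (hne : ∀ x ∈ U, x.im ≠ 0)
    (hs : IsSlice U f) (hd : DifferentiableOn ℝ f U) (hb : ∀ x ∈ U, cderivBar f x = 0) :
    ∃ m : Rad U × Rad U, SRep m f ∧ cM hU hc hne (vM U m) = (1/2 : ℝ) • cM hU hc hne m := by
  obtain ⟨h1, h2⟩ := reg_SR hU hc hne hs hd hb
  let m : Rad U × Rad U := (mkR U _ hc h1, mkR U _ hc h2)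
  have hm : SRep m f := by
    intro x hx
    change f x = (mkR U _ hc h1).1 x + x.im * (mkR U _ hc h2).1 x
    rw [mkR_apply hc h1 hx, mkR_apply hc h2 hx]
    exact hs x hx x hx rfl rfl
  clear_value m
  refine ⟨m, hm, ?_⟩
  have k1 : SR U (fun x => fderiv ℝ m.1.1 x 1 - fderiv ℝ m.2.1 x x.im - m.2.1 x) :=
    ((m.1.2.1.d1 hU hc).sub (m.2.2.1.dE hU hc)).sub m.2.2.1
  have k2 : SR U (fun x => fderiv ℝ m.2.1 x 1 + (rr x)⁻¹ • fderiv ℝ m.1.1 x x.im) :=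
    (m.2.2.1.d1 hU hc).add ((m.1.2.1.dE hU hc).rismul hne)
  have hp : SRep (mkR U _ hc k1, mkR U _ hc k2) (fun _ => 0) := by
    intro x hx
    have hr := rr_ne (hne x hx)
    change 0 = (mkR U _ hc k1).1 x + x.im * (mkR U _ hc k2).1 x
    rw [mkR_apply hc k1 hx, mkR_apply hc k2 hx]
    have h := hb x hx
    unfold cderivBar at h
    rw [qJ_term, smul_eq_zero_iff_right (by norm_num), hm.fderivR hU hx, hm.fderivR hU hx] at h
    rw [← h]
    simp only [Quaternion.im_idem, Quaternion.im_one, zero_mul, add_zero, mul_add, im_im_mul, mul_smul_comm, mul_sub]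
    match_scalars <;> field_simp
  apply M.ext'
  intro x hx
  have e1 : fderiv ℝ m.1.1 x 1 - fderiv ℝ m.2.1 x x.im - m.2.1 x = 0 := by
    have := hp.svalue_eq hc hx
    rw [← mkR_apply hc k1 hx]
    rw [← this]; simp [svalue]
  have e2 : fderiv ℝ m.2.1 x 1 + (rr x)⁻¹ • fderiv ℝ m.1.1 x x.im = 0 := by
    have := hp.sderiv_eq hc hne hx
    rw [← mkR_apply hc k2 hx]
    rw [← this]; simp [sderiv']
  have a1 : ∀ P : Rad U, ((1/2 : ℝ) • P).1 x = (1/2 : ℝ) • P.1 x := fun _ => rfl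
  have a2 : ∀ m, cM hU hc hne m = cF hU hc hne m := fun _ => rfl
  have z0 : fderiv ℝ ((0 : Rad U) : ℍq → ℍq) x = 0 := by
    simp
  have e3 : fderiv ℝ m.1.1 x 1 = fderiv ℝ m.2.1 x x.im + m.2.1 x := by
    rw [sub_sub] at e1; exact sub_eq_zero.mp e1
  have e4 : fderiv ℝ m.2.1 x 1 = - ((rr x)⁻¹ • fderiv ℝ m.1.1 x x.im) := eq_neg_of_add_eq_zero_left e2
  simp only [Prod.smul_fst, Prod.smul_snd, a1, a2, cF_1 hU hc hne _ hx, cF_2 hU hc hne _ hx]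
  have v1 : (vM U m).1 = m.1 := rfl
  have v2 : (vM U m).2 = 0 := rfl
  rw [v1, v2, z0, e4, e3]
  constructor
  · simp
    module
  · simp
    module

end concretePart

/-- general formula for `(∂_c∂_s)^k` of a slice product. -/
theorem opCS_iterate_sprod (Ω : Set ℍq) (hopen : IsOpen Ω) (hcirc : IsCircular Ω)
    (f g : ℍq → ℍq) (hf : IsSliceRegular Ω f) (hg : IsSliceRegular Ω g)
    (k : ℕ) (hk : 1 ≤ k) :
    ∀ x ∈ Ω, x.im ≠ 0 →
      opCS^[k] (sprod f g) x =
        sprod (opCS^[k] f) (svalue g) x + sprod (svalue f) (opCS^[k] g) x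
        + (1/2 : ℝ) •
          ((∑ h ∈ Finset.range k, (k-1).choose h •
              (sprod (sderiv' (opCS^[k-(h+1)] f)) (cderiv (opSC^[h] g)) x
                + sprod (cderiv (opSC^[h] f)) (sderiv' (opCS^[k-(h+1)] g)) x))
          + ∑ h ∈ Finset.Ico 1 k, (k-1).choose h •
              (sprod (opCS^[k-h] f) (opSC^[h] g) x
                + sprod (opSC^[h] f) (opCS^[k-h] g) x)) := by
  have hcU : IsCircular (Ω ∩ {x | x.im ≠ 0}) := by
    rintro x ⟨hx, hx'⟩ y h1 h2
    refine ⟨hcirc x hx y h1 h2, ?_⟩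
    change y.im ≠ 0
    rw [← norm_ne_zero_iff, h2, norm_ne_zero_iff]
    exact hx'
  have hUo : IsOpen (Ω ∩ {x : ℍq | x.im ≠ 0}) :=
    hopen.inter (isOpen_ne_fun imL.continuous continuous_const)
  have hne : ∀ x ∈ Ω ∩ {x : ℍq | x.im ≠ 0}, x.im ≠ 0 := fun x hx => hx.2
  have hr : ∀ f, IsSliceRegular Ω f → ∃ m, SRep m f ∧
      cM hUo hcU hne (vM _ m) = (1/2 : ℝ) • cM hUo hcU hne m := fun f hf =>
    reg_rep hUo hcU hne (fun x hx y hy => hf.1 x hx.1 y hy.1) (hf.2.1.mono Set.inter_subset_left)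
      (fun x hx => hf.2.2 x hx.1 hx.2)
  obtain ⟨m, hm, hm'⟩ := hr f hf
  obtain ⟨n, hn, hn'⟩ := hr g hg
  intro x hx hx'
  exact main_of_rep hUo hcU hne hm hn hm' hn' k hk x ⟨hx, hx'⟩
end
end

section
/- Let q₀ ∈ ℍ ∖ ℝ and p ≥ 1. Then for every 0 ≤ k < p, the function ∂_s(∂_c∂_s)^k (Δ_{q₀}^p) vanishes at q₀. -/
noncomputable section

open Quaternion

open scoped ContDiff

/-- The non-real quaternions. -/
def nonReal : Set ℍq := {x | x.im ≠ 0}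

/-- Smooth off the reals. -/
def Sm (f : ℍq → ℍq) : Prop := ∀ x ∈ nonReal, ContDiffAt ℝ ∞ f x

/-- `f` vanishes to order `n` at `q` and at its conjugate. -/
def Van (q : ℍq) : ℕ → (ℍq → ℍq) → Prop
  | 0, f => Sm f
  | n + 1, f => Sm f ∧ f q = 0 ∧ f (star q) = 0 ∧
      ∀ v, Sm v → Van q n (fun x => fderiv ℝ f x (v x))

/-- The imaginary part as a continuous linear map. -/
def imCLM : ℍq →L[ℝ] ℍq :=
  LinearMap.toContinuousLinearMap
    { toFun := fun x : ℍq => x.im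
      map_add' := fun x y => by simp
      map_smul' := fun r x => by simp }

/-- Conjugation as a continuous linear map. -/
def conjL : ℍq →L[ℝ] ℍq :=
  LinearMap.toContinuousLinearMap
    { toFun := fun x : ℍq => star x
      map_add' := fun x y => by simp
      map_smul' := fun r x => by simp }

theorem imCLM_apply (x : ℍq) : imCLM x = x.im := rfl
theorem conjL_apply (x : ℍq) : conjL x = star x := rfl

theorem isOpen_nonReal : IsOpen nonReal :=
  isOpen_ne_fun imCLM.continuous continuous_const

theorem star_mem_s7 {x : ℍq} (h : x ∈ nonReal) : star x ∈ nonReal := by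
  intro h'
  apply h
  simpa using h'

theorem Sm.mul {f g : ℍq → ℍq} (hf : Sm f) (hg : Sm g) : Sm (fun x => f x * g x) :=
  fun x hx => (hf x hx).mul (hg x hx)

theorem Sm.add {f g : ℍq → ℍq} (hf : Sm f) (hg : Sm g) : Sm (fun x => f x + g x) :=
  fun x hx => (hf x hx).add (hg x hx)

theorem Sm.const (c : ℍq) : Sm (fun _ => c) := fun _ _ => contDiffAt_const

theorem Sm.star_comp {f : ℍq → ℍq} (hf : Sm f) : Sm (fun x => f (star x)) :=
  fun x hx => ContDiffAt.comp x (hf _ (star_mem_s7 hx)) conjL.contDiff.contDiffAt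

theorem Sm.comp_star {f : ℍq → ℍq} (hf : Sm f) : Sm (fun x => star (f x)) :=
  fun x hx => ContDiffAt.comp x conjL.contDiff.contDiffAt (hf _ hx)

theorem Sm.fderiv {f v : ℍq → ℍq} (hf : Sm f) (hv : Sm v) :
    Sm (fun x => fderiv ℝ f x (v x)) :=
  fun x hx => ((hf x hx).fderiv_right (m := ∞) (by simp)).clm_apply (hv x hx)

theorem Sm.diff {f : ℍq → ℍq} (hf : Sm f) {x : ℍq} (hx : x ∈ nonReal) :
    DifferentiableAt ℝ f x := (hf x hx).differentiableAt (by simp)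

theorem Sm.congr {f g : ℍq → ℍq} (hf : Sm f) (h : ∀ x ∈ nonReal, f x = g x) : Sm g :=
  fun x hx => (hf x hx).congr_of_eventuallyEq
    (Filter.eventuallyEq_of_mem (isOpen_nonReal.mem_nhds hx) fun y hy => (h y hy).symm)

theorem Van.sm {q : ℍq} {n : ℕ} {f : ℍq → ℍq} (h : Van q n f) : Sm f := by
  cases n with
  | zero => exact h
  | succ n => exact h.1

theorem Van.congr {q : ℍq} (hq : q ∈ nonReal) {n : ℕ} {f g : ℍq → ℍq} (h : Van q n f)
    (e : ∀ x ∈ nonReal, f x = g x) : Van q n g := by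
  induction n generalizing f g with
  | zero => exact Sm.congr h e
  | succ n ih =>
    refine ⟨h.1.congr e, (e _ hq) ▸ h.2.1, (e _ (star_mem_s7 hq)) ▸ h.2.2.1, fun v hv => ?_⟩
    refine ih (h.2.2.2 v hv) fun x hx => ?_
    rw [Filter.EventuallyEq.fderiv_eq
      (Filter.eventuallyEq_of_mem (isOpen_nonReal.mem_nhds hx) e)]

theorem Van.pred {q : ℍq} {n : ℕ} {f : ℍq → ℍq} (h : Van q (n + 1) f) : Van q n f := by
  induction n generalizing f with
  | zero => exact h.1
  | succ n ih => exact ⟨h.1, h.2.1, h.2.2.1, fun v hv => ih (h.2.2.2 v hv)⟩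

theorem Van.add {q : ℍq} (hq : q ∈ nonReal) {n : ℕ} {f g : ℍq → ℍq} (hf : Van q n f)
    (hg : Van q n g) : Van q n (fun x => f x + g x) := by
  induction n generalizing f g with
  | zero => exact Sm.add hf hg
  | succ n ih =>
    refine ⟨hf.1.add hg.1, by simp [hf.2.1, hg.2.1], by simp [hf.2.2.1, hg.2.2.1],
      fun v hv => ?_⟩
    refine (ih (hf.2.2.2 v hv) (hg.2.2.2 v hv)).congr hq fun x hx => ?_
    rw [fderiv_fun_add (hf.1.diff hx) (hg.1.diff hx)]
    rfl

theorem fderiv_mul_at {f g : ℍq → ℍq} (hf : Sm f) (hg : Sm g) {x : ℍq} (hx : x ∈ nonReal)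
    (w : ℍq) : fderiv ℝ (fun y => f y * g y) x w
      = f x * fderiv ℝ g x w + fderiv ℝ f x w * g x := by
  rw [fderiv_fun_mul' (hf.diff hx) (hg.diff hx)]
  simp

theorem Van.mul {q : ℍq} (hq : q ∈ nonReal) {n : ℕ} {h f : ℍq → ℍq} (hh : Sm h)
    (hf : Van q n f) : Van q n (fun x => h x * f x) := by
  induction n generalizing h f with
  | zero => exact Sm.mul hh hf
  | succ n ih =>
    refine ⟨hh.mul hf.1, by simp [hf.2.1], by simp [hf.2.2.1], fun v hv => ?_⟩
    refine ((ih hh (hf.2.2.2 v hv)).add hq (ih (hh.fderiv hv) hf.pred)).congr hq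
      fun x hx => ?_
    rw [fderiv_mul_at hh hf.1 hx]

theorem Van.mul_succ {q : ℍq} (hq : q ∈ nonReal) {n : ℕ} {h f : ℍq → ℍq} (hh : Van q 1 h)
    (hf : Van q n f) : Van q (n + 1) (fun x => h x * f x) := by
  induction n generalizing f with
  | zero =>
    exact ⟨hh.1.mul hf, by simp [hh.2.1], by simp [hh.2.2.1],
      fun v hv => (hh.1.mul hf).fderiv hv⟩
  | succ n ih =>
    refine ⟨hh.1.mul hf.1, by simp [hf.2.1], by simp [hf.2.2.1], fun v hv => ?_⟩
    refine ((ih (hf.2.2.2 v hv)).add hq (hf.mul hq (hh.1.fderiv hv))).congr hq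
      fun x hx => ?_
    rw [fderiv_mul_at hh.1 hf.1 hx]

theorem Van.star_comp {q : ℍq} (hq : q ∈ nonReal) {n : ℕ} {f : ℍq → ℍq}
    (hf : Van q n f) : Van q n (fun x => f (star x)) := by
  induction n generalizing f with
  | zero => exact Sm.star_comp hf
  | succ n ih =>
    refine ⟨hf.1.star_comp, hf.2.2.1, by simpa using hf.2.1, fun v hv => ?_⟩
    refine (ih (hf.2.2.2 (fun y => star (v (star y))) hv.star_comp.comp_star)).congr hq
      fun x hx => ?_
    have := ((hf.1.diff (star_mem_s7 hx)).hasFDerivAt).comp x (conjL.hasFDerivAt (x := x))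
    have h2 : fderiv ℝ (fun x => f (star x)) x = (fderiv ℝ f (star x)).comp conjL :=
      this.fderiv
    rw [h2]
    simp [conjL_apply]

theorem sm_im : Sm (fun x => x.im) := fun _ _ => imCLM.contDiff.contDiffAt

theorem sm_qJ : Sm qJ := fun x hx =>
  (((sm_im x hx).norm ℝ hx).inv (norm_ne_zero_iff.2 hx)).smul (sm_im x hx)

theorem sm_inv : Sm (fun x => (2 * x.im)⁻¹) := by
  intro x hx
  have h2 : (2 : ℍq) ≠ 0 := by
    intro h
    have h' : (2 : ℍq).re = (0 : ℍq).re := by rw [h]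
    have h3 : (2 : ℍq).re = 2 := rfl
    rw [h3] at h'
    norm_num at h'
  have hne : (2 : ℍq) * x.im ≠ 0 := mul_ne_zero h2 hx
  have h := contDiffAt_ringInverse ℝ (n := ∞) (Units.mk0 _ hne)
  rw [Ring.inverse_eq_inv'] at h
  exact ContDiffAt.comp x h ((Sm.const 2).mul sm_im x hx)

theorem Van.sderiv {q : ℍq} (hq : q ∈ nonReal) {n : ℕ} {f : ℍq → ℍq}
    (hf : Van q n f) : Van q n (sderiv' f) := by
  refine ((hf.add hq ((hf.star_comp hq).mul hq (Sm.const (-1)))).mul hq sm_inv).congr hq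
    fun x _ => ?_
  simp [sderiv', sub_eq_add_neg]

theorem Van.cderiv {q : ℍq} (hq : q ∈ nonReal) {n : ℕ} {f : ℍq → ℍq}
    (hf : Van q (n + 1) f) : Van q n (cderiv f) := by
  refine (((hf.2.2.2 _ (Sm.const 1)).add hq (((hf.2.2.2 _ sm_qJ).mul hq sm_qJ).mul hq
    (Sm.const (-1)))).mul hq (Sm.const ((1/2 : ℝ) : ℍq))).congr hq fun x _ => ?_
  rw [_root_.cderiv, Quaternion.coe_mul_eq_smul]
  simp [sub_eq_add_neg]

theorem sm_Delta (q : ℍq) : Sm (Delta q) := by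
  intro x _
  unfold Delta
  fun_prop

theorem Delta_self (q : ℍq) : Delta q q = 0 := by
  have h : ‖q‖ ^ 2 = Quaternion.normSq q := by
    rw [Quaternion.normSq_eq_norm_mul_self, sq]
  rw [Delta, h, Quaternion.normSq_def']
  ext <;> simp [pow_two, two_mul] <;> ring

theorem Delta_star (q : ℍq) : Delta q (star q) = 0 := by
  have := Delta_self (star q)
  simpa [Delta] using this

theorem van_Delta_pow {q : ℍq} (hq : q ∈ nonReal) (p : ℕ) :
    Van q p (fun x => Delta q x ^ p) := by
  have h1 : Van q 1 (Delta q) :=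
    ⟨sm_Delta q, Delta_self q, Delta_star q, fun v hv => (sm_Delta q).fderiv hv⟩
  induction p with
  | zero => simpa [Van] using Sm.const 1
  | succ p ih => exact (h1.mul_succ hq ih).congr hq fun x _ => (pow_succ' _ _).symm

theorem van_iterate {q : ℍq} (hq : q ∈ nonReal) (k m : ℕ) (f : ℍq → ℍq)
    (hf : Van q (m + k) f) : Van q m (opCS^[k] f) := by
  induction k generalizing f with
  | zero => exact hf
  | succ k ih => exact ih _ ((hf.sderiv hq).cderiv hq)

/-- `∂_s(∂_c∂_s)^k Δ_{q₀}^p` vanishes at `q₀` for `k < p`. -/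
theorem sderiv_opCS_iterate_Delta_pow (q₀ : ℍq) (hq₀ : q₀.im ≠ 0)
    (p k : ℕ) (hp : 1 ≤ p) (hk : k < p) :
    sderiv' (opCS^[k] (fun x => Delta q₀ x ^ p)) q₀ = 0 := by
  obtain ⟨m, rfl⟩ : ∃ m, p = (m + 1) + k := ⟨p - k - 1, by omega⟩
  exact ((van_iterate hq₀ k (m + 1) _ (van_Delta_pow hq₀ _)).sderiv hq₀).2.1
end
end

section
/- Let q₀ ∈ ℍ ∖ ℝ and p ≥ 1. Then for all 0 ≤ k ≤ p, the value of (∂_c∂_s)^k applied to x ↦ Δ_{q₀}^p(x)(x − q₀), evaluated at x = q₀, equals 0. -/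
noncomputable section

open Quaternion

open Polynomial in
/-- Evaluation of a bivariate real polynomial at `(Re x - a, b² - |Im x|²)`. -/
def evP (a c : ℝ) (P : ℝ[X][X]) (x : ℍq) : ℝ :=
  Polynomial.evalEval (x.re - a) (c - ‖x.im‖ ^ 2) P

open Polynomial in
/-- Derivative in the coefficient variable. -/
def dS (P : ℝ[X][X]) : ℝ[X][X] := P.sum fun n q => Polynomial.monomial n (Polynomial.derivative q)

open Polynomial in
theorem dS_add (P Q : ℝ[X][X]) : dS (P + Q) = dS P + dS Q := by
  unfold dS
  exact Polynomial.sum_add_index _ _ _ (by simp) (by simp)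

open Polynomial in
theorem dS_monomial (n : ℕ) (q : ℝ[X]) :
    dS (Polynomial.monomial n q) = Polynomial.monomial n (Polynomial.derivative q) := by
  unfold dS
  exact Polynomial.sum_monomial_index _ _ (by simp)

open Polynomial in
theorem dS_C_mul (q : ℝ[X]) (P : ℝ[X][X]) :
    dS (C q * P) = C (derivative q) * P + C q * dS P := by
  induction P using Polynomial.induction_on' with
  | add P Q hP hQ => rw [mul_add, dS_add, hP, hQ, dS_add]; ring
  | monomial n r =>
    rw [C_mul_monomial, dS_monomial, dS_monomial, C_mul_monomial, C_mul_monomial, derivative_mul,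
      map_add]

open Polynomial in
theorem evalEval_hasFDerivAt (P : ℝ[X][X]) {s u : ℍq → ℝ} {s' u' : ℍq →L[ℝ] ℝ} {x : ℍq}
    (hs : HasFDerivAt s s' x) (hu : HasFDerivAt u u' x) :
    HasFDerivAt (fun y => evalEval (s y) (u y) P)
      (evalEval (s x) (u x) (dS P) • s' + evalEval (s x) (u x) (derivative P) • u') x := by
  induction P using Polynomial.induction_on' with
  | add P Q hP hQ =>
    simp only [evalEval_add, dS_add, derivative_add]
    refine (hP.add hQ).congr_fderiv ?_
    ext; simp; ring
  | monomial n r =>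
    rw [dS_monomial, derivative_monomial]
    simp only [evalEval, eval_monomial, eval_mul, eval_pow, eval_C]
    have h1 : HasFDerivAt (fun y => r.eval (s y)) (r.derivative.eval (s x) • s') x :=
      (r.hasDerivAt (s x)).comp_hasFDerivAt x hs
    have h2 := h1.mul (hu.pow n)
    refine h2.congr_fderiv ?_
    ext; simp; ring

theorem hasFDerivAt_re (a : ℝ) (x : ℍq) :
    ∃ L : ℍq →L[ℝ] ℝ, HasFDerivAt (fun y : ℍq => y.re - a) L x ∧ ∀ h, L h = h.re := by
  let L : ℍq →L[ℝ] ℝ := LinearMap.toContinuousLinearMap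
    { toFun := fun h : ℍq => h.re, map_add' := by simp, map_smul' := by simp }
  exact ⟨L, (L.hasFDerivAt (x := x)).sub_const a, fun h => rfl⟩

theorem hasFDerivAt_im (c : ℝ) (x : ℍq) :
    ∃ L : ℍq →L[ℝ] ℝ, HasFDerivAt (fun y : ℍq => c - ‖y.im‖ ^ 2) L x ∧
      ∀ h, L h = - (2 * inner ℝ x.im h.im) := by
  let M : ℍq →L[ℝ] ℍq := LinearMap.toContinuousLinearMap
    { toFun := fun h : ℍq => h.im, map_add' := by simp, map_smul' := by simp }
  have h := ((M.hasFDerivAt (x := x)).norm_sq).const_sub c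
  refine ⟨_, h, fun h => ?_⟩
  simp [M]

open Polynomial in
/-- The functions `P(x) + Q(x) w`. -/
def gev (a c : ℝ) (w : ℍq) (P Q : ℝ[X][X]) (x : ℍq) : ℍq :=
  (evP a c P x : ℍq) + (evP a c Q x : ℍq) * w

theorem norm_sq_comp (y : ℍq) : ‖y‖ ^ 2 = y.re ^ 2 + y.imI ^ 2 + y.imJ ^ 2 + y.imK ^ 2 := by
  rw [sq, ← Quaternion.normSq_eq_norm_mul_self, Quaternion.normSq_def']

theorem im_im (x : ℍq) : x.im.im = x.im := by ext <;> simp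

open Polynomial in
theorem gev_fderiv (a c : ℝ) (w : ℍq) (P Q : ℝ[X][X]) (x h : ℍq) :
    fderiv ℝ (gev a c w P Q) x h =
      h.re • gev a c w (dS P) (dS Q) x
        - (2 * inner ℝ x.im h.im) • gev a c w (derivative P) (derivative Q) x := by
  obtain ⟨S, hS, hS'⟩ := hasFDerivAt_re a x
  obtain ⟨U, hU, hU'⟩ := hasFDerivAt_im c x
  have hP := evalEval_hasFDerivAt P hS hU
  have hQ := evalEval_hasFDerivAt Q hS hU
  have h1 := (hP.smul_const (1 : ℍq)).add (hQ.smul_const w)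
  have h2 : gev a c w P Q = (fun y => evalEval (y.re - a) (c - ‖y.im‖ ^ 2) P • (1 : ℍq))
      + fun y => evalEval (y.re - a) (c - ‖y.im‖ ^ 2) Q • w := by
    funext y
    simp only [gev, evP, Quaternion.coe_mul_eq_smul, Pi.add_apply]
    congr 1
    ext <;> simp
  rw [h2, h1.fderiv]
  simp only [gev, evP, Quaternion.coe_mul_eq_smul, add_apply,
    ContinuousLinearMap.smulRight_apply, smul_apply, hS', hU', smul_eq_mul,
    smul_add, smul_smul]
  have e : ∀ r : ℝ, (r : ℍq) = r • (1 : ℍq) := fun r => by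
    ext <;> simp
  simp only [e]
  module

open Polynomial in
theorem cderiv_gev (a c : ℝ) (w : ℍq) (P Q : ℝ[X][X]) (F : ℍq → ℍq)
    (hF : ∀ x : ℍq, x.im ≠ 0 → F x = gev a c w P Q x) (x : ℍq) (hx : x.im ≠ 0) :
    cderiv F x = (1/2 : ℝ) • gev a c w (dS P) (dS Q) x
      + x.im * gev a c w (derivative P) (derivative Q) x := by
  have hcont : Continuous (fun y : ℍq => y.im) := Quaternion.continuous_im
  have hev : F =ᶠ[nhds x] gev a c w P Q :=
    (hcont.continuousAt.eventually_ne hx).mono fun y hy => hF y hy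
  have hn : ‖x.im‖ ≠ 0 := norm_ne_zero_iff.mpr hx
  unfold cderiv
  rw [hev.fderiv_eq, gev_fderiv, gev_fderiv]
  have h1 : (qJ x).re = 0 := by simp [qJ]
  have h2 : inner ℝ x.im (qJ x).im = ‖x.im‖ := by
    have : (qJ x).im = ‖x.im‖⁻¹ • x.im := by simp [qJ, im_im]
    rw [this, inner_smul_right, real_inner_self_eq_norm_sq]
    field_simp
  rw [h1, h2]
  have h3 : (1 : ℍq).im = 0 := by simp
  rw [h3, inner_zero_right]
  simp only [qJ, Quaternion.re_one, one_smul, mul_zero, zero_smul, zero_sub, sub_zero, mul_neg,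
    smul_mul_assoc, mul_smul_comm, smul_smul, sub_neg_eq_add, smul_add]
  congr 1
  have : 1 / 2 * (‖x.im‖⁻¹ * (2 * ‖x.im‖)) = 1 := by field_simp
  have h' : 1 / 2 * (2 * ‖x.im‖ * ‖x.im‖⁻¹) = 1 := by field_simp
  first
  | rw [this, one_smul]
  | rw [h', one_smul]

theorem sderiv_of (F A B : ℍq → ℍq) (hF : ∀ x : ℍq, x.im ≠ 0 → F x = A x + x.im * B x)
    (hA : ∀ x, A (star x) = A x) (hB : ∀ x, B (star x) = B x) (x : ℍq) (hx : x.im ≠ 0) :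
    sderiv' F x = B x := by
  have hs : (star x).im = - x.im := by ext <;> simp
  unfold sderiv'
  rw [hF x hx, hF (star x) (by rw [hs]; exact neg_ne_zero.mpr hx), hA, hB, hs]
  have : A x + x.im * B x - (A x + -x.im * B x) = (2 * x.im) * B x := by noncomm_ring
  rw [this, ← mul_assoc, inv_mul_cancel₀, one_mul]
  intro h0
  apply hx
  have h2 : (2 : ℍq) * x.im = (2 : ℝ) • x.im := by rw [two_mul, two_smul]
  rw [h2] at h0
  exact (smul_eq_zero.mp h0).resolve_left two_ne_zero

open Polynomial in
theorem evP_star (a c : ℝ) (P : ℝ[X][X]) (x : ℍq) : evP a c P (star x) = evP a c P x := by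
  have hs : (star x).im = - x.im := by ext <;> simp
  simp [evP, hs]

open Polynomial in
theorem gev_star (a c : ℝ) (w : ℍq) (P Q : ℝ[X][X]) (x : ℍq) :
    gev a c w P Q (star x) = gev a c w P Q x := by
  simp only [gev, evP_star]

open Polynomial in
theorem sderiv_iter (a c : ℝ) (w : ℍq) (P Q : ℝ[X][X]) (f : ℍq → ℍq)
    (hf : ∀ x : ℍq, x.im ≠ 0 → sderiv' f x = gev a c w P Q x) (k : ℕ) :
    ∀ x : ℍq, x.im ≠ 0 →
      sderiv' (opCS^[k] f) x = gev a c w (derivative^[k] P) (derivative^[k] Q) x := by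
  induction k with
  | zero => exact hf
  | succ k ih =>
    intro x hx
    rw [Function.iterate_succ_apply', Function.iterate_succ_apply', Function.iterate_succ_apply']
    refine sderiv_of _ (fun x => (1/2 : ℝ) • gev a c w (dS (derivative^[k] P))
      (dS (derivative^[k] Q)) x) _ (fun y hy => cderiv_gev a c w _ _ _ ih y hy)
      (fun y => ?_) (fun y => ?_) x hx
    · simp only [gev_star]
    · simp only [gev_star]

open Polynomial in
/-- Structure of `Δ^n`. -/
theorem Delta_pow (q₀ : ℍq) (n : ℕ) : ∃ A B R T : ℝ[X][X],
    (∀ x, Delta q₀ x ^ n = (evP q₀.re (‖q₀.im‖ ^ 2) A x : ℍq)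
      + x.im * (evP q₀.re (‖q₀.im‖ ^ 2) B x : ℍq)) ∧
    A = X ^ n + C (X ^ 2) * R ∧ B = C ((2 * n : ℝ) • X) * X ^ (n - 1) + C (X ^ 2) * T := by
  induction n with
  | zero => exact ⟨1, 0, 0, 0, by simp [evP], by simp, by simp⟩
  | succ n ih =>
    obtain ⟨A, B, R, T, h, hA, hB⟩ := ih
    refine ⟨A * (C (X ^ 2) + X) + (X - C (C (‖q₀.im‖ ^ 2))) * B * C (2 * X),
      A * C (2 * X) + B * (C (X ^ 2) + X),
      X ^ n + R * (C (X ^ 2) + X) + (X - C (C (‖q₀.im‖ ^ 2))) * 2 *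
        (C (C (2 * n : ℝ)) * X ^ (n - 1) + C X * T),
      R * C (2 * X) + C ((2 * n : ℝ) • X) * X ^ (n - 1) + T * (C (X ^ 2) + X), ?_, ?_, ?_⟩
    · intro x
      have hD : Delta q₀ x = (((x.re - q₀.re) ^ 2 + (‖q₀.im‖ ^ 2 - ‖x.im‖ ^ 2) : ℝ) : ℍq)
          + x.im * ((2 * (x.re - q₀.re) : ℝ) : ℍq) := by
        unfold Delta
        have e2 : (2 : ℍq) = ((2 : ℝ) : ℍq) := by norm_cast
        rw [norm_sq_comp, norm_sq_comp, norm_sq_comp, e2, sq x]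
        ext <;> simp [-Quaternion.coe_pow] <;> ring
      rw [pow_succ, h, hD]
      simp only [evP, evalEval_add, evalEval_mul, evalEval_sub, evalEval_C, evalEval_X, eval_pow,
        eval_X, eval_mul, eval_ofNat, eval_C]
      generalize evalEval (x.re - q₀.re) (‖q₀.im‖ ^ 2 - ‖x.im‖ ^ 2) A = α
      generalize evalEval (x.re - q₀.re) (‖q₀.im‖ ^ 2 - ‖x.im‖ ^ 2) B = β
      rw [norm_sq_comp x.im]
      generalize ‖q₀.im‖ ^ 2 = c
      ext <;> simp [-Quaternion.coe_pow] <;> ring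
    · rw [hA, hB]
      simp only [smul_eq_C_mul, map_mul, map_pow, map_ofNat]
      ring
    · rw [hA, hB]
      cases n with
      | zero =>
        simp only [smul_eq_C_mul, map_mul, map_pow, map_ofNat, map_add, Nat.cast_zero, mul_zero,
          map_zero, Nat.cast_add, Nat.cast_one, map_one, zero_mul, zero_add, pow_zero,
          Nat.sub_self]
        ring
      | succ m =>
        simp only [smul_eq_C_mul, map_mul, map_pow, map_ofNat, Nat.add_sub_cancel, map_add,
          Nat.cast_add, Nat.cast_one, map_one]
        ring

open Polynomial in
theorem dS_X_pow (n : ℕ) : dS (X ^ n : ℝ[X][X]) = 0 := by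
  rw [← monomial_one_right_eq_X_pow, dS_monomial]
  simp

open Polynomial in
theorem iter_X_pow (n m : ℕ) : derivative^[m] (X ^ n : ℝ[X][X]) =
    C (C (n.descFactorial m : ℝ)) * X ^ (n - m) := by
  rw [iterate_derivative_X_pow_eq_natCast_mul]
  simp

theorem opCS_iterate_Delta_pow_mul (q₀ : ℍq) (hq₀ : q₀.im ≠ 0)
    (p k : ℕ) (hp : 1 ≤ p) (hk : k ≤ p) :
    opCS^[k] (fun x => Delta q₀ x ^ p * (x - q₀)) q₀ = 0 := by
  cases k with
  | zero => simp
  | succ m =>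
  obtain ⟨n, rfl⟩ : ∃ n, p = n + 1 := ⟨p - 1, by omega⟩
  obtain ⟨A, B, R, T, h, hA, hB⟩ := Delta_pow q₀ (n + 1)
  set a := q₀.re with ha
  set c := ‖q₀.im‖ ^ 2 with hc
  have hf : ∀ x : ℍq, x.im ≠ 0 → sderiv' (fun x => Delta q₀ x ^ (n + 1) * (x - q₀)) x =
      gev a c q₀.im (A + B * Polynomial.C Polynomial.X) (-B) x := by
    refine sderiv_of _ (gev a c q₀.im (A * Polynomial.C Polynomial.X +
      B * (Polynomial.X - Polynomial.C (Polynomial.C c))) (-A)) _ ?_ (gev_star _ _ _ _ _)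
      (gev_star _ _ _ _ _)
    intro x hx
    have hsub : x - q₀ = ((x.re - a : ℝ) : ℍq) + x.im - q₀.im := by
      ext <;> simp [ha]
    simp only [h]
    rw [hsub]
    simp only [gev, evP, Polynomial.evalEval_add, Polynomial.evalEval_mul, Polynomial.evalEval_sub,
      Polynomial.evalEval_neg, Polynomial.evalEval_C, Polynomial.evalEval_X, Polynomial.eval_X,
      Polynomial.eval_C]
    generalize Polynomial.evalEval (x.re - a) (c - ‖x.im‖ ^ 2) A = α
    generalize Polynomial.evalEval (x.re - a) (c - ‖x.im‖ ^ 2) B = β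
    have him : q₀.im.re = 0 := by simp
    generalize q₀.im = w at him
    rw [norm_sq_comp x.im]
    generalize x.re - a = σ
    ext <;> simp [him, -Quaternion.coe_pow] <;> ring
  rw [Function.iterate_succ_apply']
  unfold opCS
  rw [show cderiv (sderiv' ((fun f => cderiv (sderiv' f))^[m] _)) q₀ = _ from
    cderiv_gev a c q₀.im _ _ _ (sderiv_iter a c q₀.im _ _ _ hf m) q₀ hq₀]
  rw [← Function.iterate_succ_apply' (Polynomial.derivative),
    ← Function.iterate_succ_apply' (Polynomial.derivative)]
  have hP : A + B * Polynomial.C Polynomial.X = Polynomial.X ^ (n + 1) +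
      Polynomial.C (Polynomial.X ^ 2) * (R + Polynomial.C (Polynomial.C (2 * (n + 1 : ℝ))) *
        Polynomial.X ^ n + Polynomial.C Polynomial.X * T) := by
    rw [hA, hB]
    simp only [Polynomial.smul_eq_C_mul, map_mul, map_pow, map_ofNat, map_add,
      Nat.cast_add, Nat.cast_one, map_one, Nat.add_sub_cancel]
    ring
  have hQ : -B = Polynomial.C (Polynomial.C (-(2 * (n + 1 : ℝ))) * Polynomial.X) *
      Polynomial.X ^ n + Polynomial.C (Polynomial.X ^ 2) * (-T) := by
    rw [hB]
    simp only [Polynomial.smul_eq_C_mul, map_mul, map_pow, map_ofNat, map_add, map_neg,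
      Nat.cast_add, Nat.cast_one, map_one, Nat.add_sub_cancel]
    ring
  rw [hP, hQ]
  have hev : ∀ P, evP a c P q₀ = Polynomial.evalEval 0 0 P := by
    intro P
    simp [evP, ha, hc]
  generalize R + Polynomial.C (Polynomial.C (2 * (n + 1 : ℝ))) *
        Polynomial.X ^ n + Polynomial.C Polynomial.X * T = R'
  generalize -T = T'
  simp only [gev, hev, iterate_map_add, Polynomial.iterate_derivative_C_mul,
    iter_X_pow, dS_add, dS_C_mul, dS_X_pow, Nat.succ_descFactorial_succ, Nat.add_sub_add_right,
    Polynomial.evalEval_add, Polynomial.evalEval_mul, Polynomial.evalEval_C,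
    Polynomial.evalEval_pow, Polynomial.evalEval_X, Polynomial.eval_mul, Polynomial.eval_C,
    Polynomial.eval_X, Polynomial.eval_pow, Polynomial.derivative_C, Polynomial.derivative_mul,
    Polynomial.derivative_X, Polynomial.derivative_X_pow, Polynomial.eval_add,
    Polynomial.evalEval_zero, Polynomial.eval_zero, Polynomial.eval_one]
  ext <;> simp [-Quaternion.coe_pow] <;> ring
end
end
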